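/- arXiv:1007.3807 — 4 statements merged into one kernel-verified Lean document; each statement's English description precedes it below -/
import Mathlib

section
/- Let N be a subspace of K^V where K = F², equipped with the bilinear form ⟨f,g⟩ = Σ_{x∈V} ⟨f(x),g(x)⟩_K. For any subset X ⊆ V, (N·X)^⊥ = N^⊥ × X, where N·X = {f restricted to X : f ∈ N} and N × X = {f restricted to X : f ∈ N, f vanishes on V∖X}. -/
variable {F : Type*} [Field F] {V : Type*} [Fintype V] [DecidableEq V]

def bplusL (F : Type*) [Field F] : (F × F) →ₗ[F] (F × F) →ₗ[F] F :=
  LinearMap.mk₂ F (fun x y => x.1 * y.2 + x.2 * y.1)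
    (by intros; simp [Prod.fst_add, Prod.snd_add]; ring)
    (by intros; simp [Prod.smul_fst, Prod.smul_snd, smul_eq_mul]; ring)
    (by intros; simp [Prod.fst_add, Prod.snd_add]; ring)
    (by intros; simp [Prod.smul_fst, Prod.smul_snd, smul_eq_mul]; ring)

def bminusL (F : Type*) [Field F] : (F × F) →ₗ[F] (F × F) →ₗ[F] F :=
  LinearMap.mk₂ F (fun x y => x.1 * y.2 - x.2 * y.1)
    (by intros; simp [Prod.fst_add, Prod.snd_add]; ring)
    (by intros; simp [Prod.smul_fst, Prod.smul_snd, smul_eq_mul]; ring)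
    (by intros; simp [Prod.fst_add, Prod.snd_add]; ring)
    (by intros; simp [Prod.smul_fst, Prod.smul_snd, smul_eq_mul]; ring)

/-- Restriction of chains to a subset `X` of the ground set. -/
def res (F K : Type*) [Semiring F] [AddCommMonoid K] [Module F K]
    {V : Type*} (X : Finset V) : (V → K) →ₗ[F] ({x // x ∈ X} → K) :=
  LinearMap.funLeft F K Subtype.val

/-- `N·X`, the restriction of the chain-group `N` to `X`. -/
def restrictTo {K : Type*} [AddCommGroup K] [Module F K]
    (N : Submodule F (V → K)) (X : Finset V) : Submodule F ({x // x ∈ X} → K) :=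
  N.map (res F K X)

/-- Chains vanishing outside `X`. -/
def vanish (F : Type*) [Semiring F] {K : Type*} [AddCommMonoid K] [Module F K]
    {V : Type*} (X : Finset V) : Submodule F (V → K) where
  carrier := {f | ∀ v ∉ X, f v = 0}
  add_mem' := by
    intro a b ha hb v hv
    simp only [Pi.add_apply, ha v hv, hb v hv, add_zero]
  zero_mem' := by intro v hv; rfl
  smul_mem' := by
    intro c a ha v hv
    simp only [Pi.smul_apply, ha v hv, smul_zero]

/-- `N×X`, the restriction to `X` of the chains in `N` vanishing outside `X`. -/
def timesTo {K : Type*} [AddCommGroup K] [Module F K]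
    (N : Submodule F (V → K)) (X : Finset V) : Submodule F ({x // x ∈ X} → K) :=
  (N ⊓ vanish F X).map (res F K X)

/-- The linear functional `g ↦ ⟨f, g⟩ = ∑ x, ⟨f x, g x⟩_K` on `K^ι`. -/
noncomputable def pairAll (β : (F × F) →ₗ[F] (F × F) →ₗ[F] F) {ι : Type*}
    [Fintype ι] (f : ι → F × F) : (ι → F × F) →ₗ[F] F :=
  ∑ x, (β (f x)).comp (LinearMap.proj x)

/-- The orthogonal complement of a chain-group with respect to the form
`⟨f, g⟩ = ∑ x, ⟨f x, g x⟩_K`. -/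
noncomputable def orthCG (β : (F × F) →ₗ[F] (F × F) →ₗ[F] F) {ι : Type*}
    [Fintype ι] (N : Submodule F (ι → F × F)) : Submodule F (ι → F × F) :=
  ⨅ f ∈ N, LinearMap.ker (pairAll β f)

/-!
Extension by zero `K^X → K^V` is adjoint to restriction `K^V → K^X`, and `N × X` is the preimage of
`N` under extension by zero. The identity is therefore an instance of the rule that the orthogonal
complement of an image is the preimage of the orthogonal complement under the adjoint map.
-/

theorem orthogonalBilin_map_eq_comap {R R₁ R₂ M M₁ M₁' M₂ M₂' : Type*}
    [CommSemiring R] [CommSemiring R₁] [CommSemiring R₂] [AddCommMonoid M] [Module R M]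
    [AddCommMonoid M₁] [Module R₁ M₁] [AddCommMonoid M₁'] [Module R₁ M₁']
    [AddCommMonoid M₂] [Module R₂ M₂] [AddCommMonoid M₂'] [Module R₂ M₂']
    {I₁ : R₁ →+* R} {I₂ : R₂ →+* R}
    {B : M₁ →ₛₗ[I₁] M₂ →ₛₗ[I₂] M} {B' : M₁' →ₛₗ[I₁] M₂' →ₛₗ[I₂] M}
    {φ : M₁ →ₗ[R₁] M₁'} {ψ : M₂' →ₗ[R₂] M₂} (adjoint : ∀ x y, B' (φ x) y = B x (ψ y))
    (S : Submodule R₁ M₁) :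
    (S.map φ).orthogonalBilin B' = (S.orthogonalBilin B).comap ψ := by
  ext y
  simp only [Submodule.mem_orthogonalBilin_iff, Submodule.mem_comap, Submodule.mem_map,
    forall_exists_index, and_imp, forall_apply_eq_imp_iff₂, adjoint]

section ExtendByZero

variable {R L ι : Type*} [Semiring R] [AddCommMonoid L] [Module R L]

variable (R L) in
/-- The extension of a chain on `X` to the whole ground set by the value `0` outside `X`; it
identifies the chains on `X` with those vanishing outside `X`. -/
noncomputable def extendByZero (X : Finset ι) : ({x // x ∈ X} → L) →ₗ[R] (ι → L) where
  toFun g := Function.extend Subtype.val g 0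
  map_add' g h := by simpa using Function.extend_add Subtype.val g h 0 0
  map_smul' c g := by simpa using Function.extend_smul c Subtype.val g 0

variable {X : Finset ι}

theorem extendByZero_apply_coe (g : {x // x ∈ X} → L) (x : {x // x ∈ X}) :
    extendByZero R L X g x = g x :=
  Subtype.val_injective.extend_apply g (0 : ι → L) x

theorem extendByZero_apply_of_notMem (g : {x // x ∈ X} → L) {v : ι} (hv : v ∉ X) :
    extendByZero R L X g v = 0 :=
  Function.extend_apply' g (0 : ι → L) v fun ⟨x, hx⟩ => hv (hx ▸ x.2)

theorem res_extendByZero (g : {x // x ∈ X} → L) : res R L X (extendByZero R L X g) = g :=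
  funext (extendByZero_apply_coe (R := R) g)

theorem extendByZero_mem_vanish (g : {x // x ∈ X} → L) : extendByZero R L X g ∈ vanish R X :=
  fun _ hv => extendByZero_apply_of_notMem g hv

theorem extendByZero_res_of_mem_vanish {h : ι → L} (hh : h ∈ vanish R X) :
    extendByZero R L X (res R L X h) = h := by
  funext v
  by_cases hv : v ∈ X
  · exact extendByZero_apply_coe (res R L X h) ⟨v, hv⟩
  · rw [extendByZero_apply_of_notMem _ hv, hh v hv]

theorem map_res_inf_vanish_eq_comap (N : Submodule R (ι → L)) (X : Finset ι) :
    (N ⊓ vanish R X).map (res R L X) = N.comap (extendByZero R L X) := by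
  ext g
  constructor
  · rintro ⟨h, ⟨hN, hX⟩, rfl⟩
    rwa [Submodule.mem_comap, extendByZero_res_of_mem_vanish hX]
  · intro hg
    exact ⟨extendByZero R L X g, ⟨hg, extendByZero_mem_vanish g⟩, res_extendByZero g⟩

end ExtendByZero

section ChainPairing

variable {R K L P : Type*} [CommSemiring R] [AddCommMonoid K] [Module R K]
  [AddCommMonoid L] [Module R L] [AddCommMonoid P] [Module R P]

/-- The bilinear map `⟨f, g⟩ = ∑ x, β (f x) (g x)` on chains induced by a bilinear map `β` on their
values. -/
def chainPairing (β : K →ₗ[R] L →ₗ[R] P) (ι : Type*) [Fintype ι] :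
    (ι → K) →ₗ[R] (ι → L) →ₗ[R] P :=
  ∑ x, β.compl₁₂ (LinearMap.proj x) (LinearMap.proj x)

variable {ι : Type*} [Fintype ι]

theorem chainPairing_apply (β : K →ₗ[R] L →ₗ[R] P) (f : ι → K) (g : ι → L) :
    chainPairing β ι f g = ∑ x, β (f x) (g x) := by
  simp only [chainPairing, LinearMap.sum_apply, LinearMap.compl₁₂_apply, LinearMap.proj_apply]

theorem chainPairing_res_left (β : K →ₗ[R] L →ₗ[R] P) {X : Finset ι} (f : ι → K)
    (g : {x // x ∈ X} → L) :
    chainPairing β {x // x ∈ X} (res R K X f) g = chainPairing β ι f (extendByZero R L X g) := by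
  rw [chainPairing_apply, chainPairing_apply]
  refine Fintype.sum_of_injective Subtype.val Subtype.val_injective _ _ (fun v hv => ?_)
    fun x => ?_
  · rw [Subtype.range_coe] at hv
    rw [extendByZero_apply_of_notMem g hv, map_zero]
  · exact congrArg (β (f x)) (extendByZero_apply_coe g x).symm

theorem orth_restrict_eq_times_orth_general (β : K →ₗ[R] L →ₗ[R] P)
    (N : Submodule R (ι → K)) (X : Finset ι) :
    (N.map (res R K X)).orthogonalBilin (chainPairing β {x // x ∈ X}) =
      (N.orthogonalBilin (chainPairing β ι) ⊓ vanish R X).map (res R L X) := by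
  rw [map_res_inf_vanish_eq_comap]
  exact orthogonalBilin_map_eq_comap (chainPairing_res_left β) N

end ChainPairing

theorem orthCG_eq_orthogonalBilin (β : (F × F) →ₗ[F] (F × F) →ₗ[F] F) {ι : Type*} [Fintype ι]
    (N : Submodule F (ι → F × F)) : orthCG β N = N.orthogonalBilin (chainPairing β ι) := by
  ext g
  simp only [orthCG, pairAll, Submodule.mem_iInf, LinearMap.mem_ker, LinearMap.sum_apply,
    LinearMap.comp_apply, LinearMap.proj_apply, Submodule.mem_orthogonalBilin_iff,
    chainPairing_apply]

/-- `(N·X)^⊥ = N^⊥ × X`. -/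
theorem orth_restrict_eq_times_orth (β : (F × F) →ₗ[F] (F × F) →ₗ[F] F)
    (hβ : β = bplusL F ∨ β = bminusL F)
    (N : Submodule F (V → F × F)) (X : Finset V) :
    orthCG β (restrictTo N X) = timesTo (orthCG β N) X := by
  rw [orthCG_eq_orthogonalBilin, orthCG_eq_orthogonalBilin]
  exact orth_restrict_eq_times_orth_general β N X
end

section
/- Let N be a subspace of K^V. For subsets X, Y ⊆ V, dim(N×(X∪Y)) + dim(N×(X∩Y)) ≥ dim(N×X) + dim(N×Y), where N×T = {f restricted to T : f ∈ N, f vanishes on V∖T}. -/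
variable {F : Type*} [Field F] {V : Type*} [Fintype V] [DecidableEq V]

/-!
Restriction to `X` is injective on the chains vanishing outside `X`, so `N×X` has the dimension of
`N ⊓ vanish F X`. These subspaces turn intersections into infima, while the supremum of those for
`X` and `Y` is only contained in the one for `X ∪ Y`; the modular law for dimensions of subspaces
then gives the inequality.
-/

section Vanish

variable {R M α : Type*} [Semiring R] [AddCommMonoid M] [Module R M]

theorem injOn_res_vanish (X : Finset α) :
    Set.InjOn (res R M X) (vanish R X : Submodule R (α → M)) := by
  intro f hf g hg hfg
  funext v
  by_cases hv : v ∈ X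
  · exact congrFun hfg ⟨v, hv⟩
  · rw [hf v hv, hg v hv]

theorem vanish_mono : Monotone (vanish R : Finset α → Submodule R (α → M)) :=
  fun _ _ hXY _ hf v hv => hf v fun hX => hv (hXY hX)

theorem vanish_inter [DecidableEq α] (X Y : Finset α) :
    (vanish R (X ∩ Y) : Submodule R (α → M)) = vanish R X ⊓ vanish R Y := by
  refine le_antisymm (vanish_mono.map_inf_le X Y) ?_
  rintro f ⟨hfX, hfY⟩ v hv
  by_cases hvX : v ∈ X
  · exact hfY v fun hvY => hv (Finset.mem_inter.2 ⟨hvX, hvY⟩)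
  · exact hfX v hvX

end Vanish

section TimesTo

variable {K : Type*} [AddCommGroup K] [Module F K] (N : Submodule F (V → K)) (X Y : Finset V)

omit [Fintype V] [DecidableEq V] in
theorem rank_timesTo : Module.rank F (timesTo N X) = Module.rank F ↥(N ⊓ vanish F X) := by
  have res_injective : Function.Injective ((res F K X).domRestrict (N ⊓ vanish F X)) :=
    fun f g hfg => Subtype.ext (injOn_res_vanish X f.2.2 g.2.2 hfg)
  rw [timesTo, ← LinearMap.range_domRestrict]
  exact rank_range_of_injective _ res_injective

omit [Fintype V] in
theorem finrank_times_union_add_inter_general :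
    Module.rank F (timesTo N X) + Module.rank F (timesTo N Y)
      ≤ Module.rank F (timesTo N (X ∪ Y)) + Module.rank F (timesTo N (X ∩ Y)) := by
  have sup_le_union : N ⊓ vanish F X ⊔ N ⊓ vanish F Y ≤ N ⊓ vanish F (X ∪ Y) :=
    le_inf_sup.trans (inf_le_inf_left N (vanish_mono.le_map_sup X Y))
  have inf_eq_inter : (N ⊓ vanish F X) ⊓ (N ⊓ vanish F Y) = N ⊓ vanish F (X ∩ Y) := by
    rw [vanish_inter, ← inf_inf_distrib_left]
  simp only [rank_timesTo]
  rw [← Submodule.rank_sup_add_rank_inf_eq, inf_eq_inter]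
  gcongr
  exact Submodule.rank_mono sup_le_union

end TimesTo

/-- `dim(N×(X∪Y)) + dim(N×(X∩Y)) ≥ dim(N×X) + dim(N×Y)`. -/
theorem finrank_times_union_add_inter {K : Type*} [AddCommGroup K] [Module F K]
    [FiniteDimensional F K] (N : Submodule F (V → K)) (X Y : Finset V) :
    Module.finrank F (timesTo N X) + Module.finrank F (timesTo N Y)
      ≤ Module.finrank F (timesTo N (X ∪ Y))
        + Module.finrank F (timesTo N (X ∩ Y)) := by
  have rank_le := finrank_times_union_add_inter_general N X Y
  simp only [← Module.finrank_eq_rank] at rank_le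
  exact_mod_cast rank_le
end

section
/- Let N be a Lagrangian chain-group on V to K = F², i.e., a totally isotropic subspace of K^V of dimension |V| with respect to ⟨f,g⟩ = Σ_x ⟨f(x),g(x)⟩_K. Then for all X ⊆ V, dim(N·X) − dim(N×X) = 2(|X| − dim(N×X)); equivalently λ_N(X) = |X| − dim(N×X) is an integer. -/
variable {F : Type*} [Field F] {V : Type*} [Fintype V] [DecidableEq V]

/-- The symmetric bilinear form `b⁺((a,b),(c,d)) = ad + bc` on `K = F²`. -/
def bplus : F × F → F × F → F := fun x y => x.1 * y.2 + x.2 * y.1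

/-- The skew-symmetric bilinear form `b⁻((a,b),(c,d)) = ad − bc` on `K = F²`. -/
def bminus : F × F → F × F → F := fun x y => x.1 * y.2 - x.2 * y.1

/-!
Summing a nondegenerate form on `K` over the ground set gives a nondegenerate form on chains, for
which restriction and contraction are dual: a chain on `X` is orthogonal to `N·X` exactly when its
extension by zero is orthogonal to `N`, so `(N·X)^⊥ = N^⊥×X`. Half-dimensionality of a Lagrangian
`N` turns `N ≤ N^⊥` into `N = N^⊥`, hence `dim (N·X) + dim (N×X) = |X| dim K`.
-/

open LinearMap (BilinForm)
open Module (finrank)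

section Orthogonal

variable {W : Type*} [AddCommGroup W] [Module F W] [FiniteDimensional F W] {B : BilinForm F W}

theorem finrank_add_finrank_orthogonal_of_separatingLeft (hB : B.SeparatingLeft)
    (N : Submodule F W) : finrank F N + finrank F (B.orthogonal N) = finrank F W := by
  rw [BilinForm.finrank_add_finrank_orthogonal', LinearMap.separatingLeft_iff_ker_eq_bot.mp hB,
    inf_bot_eq, finrank_bot, add_zero]

theorem orthogonal_eq_self_of_le_of_two_mul_finrank_eq (hB : B.SeparatingLeft) {N : Submodule F W}
    (hN : N ≤ B.orthogonal N) (hdim : 2 * finrank F N = finrank F W) : B.orthogonal N = N := by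
  have hsum := finrank_add_finrank_orthogonal_of_separatingLeft hB N
  exact (Submodule.eq_of_le_of_finrank_eq hN (by lia)).symm

end Orthogonal

theorem map_res_vanish {R M ι : Type*} [Semiring R] [AddCommMonoid M] [Module R M]
    (X : Finset ι) : (vanish R X).map (res R M X) = ⊤ := by
  refine eq_top_iff.mpr fun g _ => ⟨Function.extend Subtype.val g 0, fun v hv => ?_, ?_⟩
  · exact Function.extend_apply' _ _ _ fun ⟨x, hx⟩ => hv (hx ▸ x.2)
  · exact funext fun x => Subtype.val_injective.extend_apply g 0 x

section ChainForm

variable {R M ι : Type*} [CommSemiring R] [AddCommMonoid M] [Module R M]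

/-- The bilinear form `⟨f, g⟩ = ∑ i, ⟨f i, g i⟩` on chains `ι → M` induced by a form on `M`. -/
def chainForm (B : BilinForm R M) (ι : Type*) [Fintype ι] : BilinForm R (ι → M) :=
  ∑ i, B.compl₁₂ (.proj i) (.proj i)

theorem chainForm_apply (B : BilinForm R M) [Fintype ι] (f g : ι → M) :
    chainForm B ι f g = ∑ i, B (f i) (g i) := by
  simp [chainForm]

theorem chainForm_single_right [Fintype ι] [DecidableEq ι] (B : BilinForm R M) (f : ι → M) (i : ι)
    (m : M) : chainForm B ι f (Pi.single i m) = B (f i) m := by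
  simp [chainForm_apply, Pi.single_apply, apply_ite]

theorem separatingLeft_chainForm {B : BilinForm R M} (hB : B.SeparatingLeft) (ι : Type*)
    [Fintype ι] : (chainForm B ι).SeparatingLeft := by
  classical
  exact fun f hf => funext fun i => hB (f i) fun m =>
    (chainForm_single_right B f i m).symm.trans (hf (Pi.single i m))

theorem chainForm_res_of_mem_vanish [Fintype ι] (B : BilinForm R M) {X : Finset ι} (f : ι → M)
    {g : ι → M} (hg : g ∈ vanish R X) :
    chainForm B {x // x ∈ X} (res R M X f) (res R M X g) = chainForm B ι f g := by
  rw [chainForm_apply, chainForm_apply]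
  calc ∑ x : {x // x ∈ X}, B (f x) (g x) = ∑ x ∈ X, B (f x) (g x) :=
        Finset.sum_coe_sort X fun x => B (f x) (g x)
    _ = ∑ x, B (f x) (g x) :=
        Finset.sum_subset X.subset_univ fun x _ hx => by rw [hg x hx, map_zero]

end ChainForm

section ChainGroup

variable {K ι : Type*} [AddCommGroup K] [Module F K] [Fintype ι]

theorem orthogonal_restrictTo (B : BilinForm F K) (N : Submodule F (ι → K)) (X : Finset ι) :
    (chainForm B {x // x ∈ X}).orthogonal (restrictTo N X) =
      timesTo ((chainForm B ι).orthogonal N) X := by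
  ext g
  constructor
  · intro hg
    obtain ⟨g, hgX, rfl⟩ : g ∈ (vanish F X).map (res F K X) := by
      rw [map_res_vanish]
      exact Submodule.mem_top
    refine ⟨g, ⟨fun f hf => ?_, hgX⟩, rfl⟩
    exact (chainForm_res_of_mem_vanish B f hgX).symm.trans (hg _ (Submodule.mem_map_of_mem hf))
  · rintro ⟨g, ⟨hg, hgX⟩, rfl⟩ _ ⟨f, hf, rfl⟩
    exact (chainForm_res_of_mem_vanish B f hgX).trans (hg f hf)

theorem finrank_restrictTo_add_finrank_timesTo_orthogonal [FiniteDimensional F K]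
    {B : BilinForm F K} (hB : B.SeparatingLeft) (N : Submodule F (ι → K)) (X : Finset ι) :
    finrank F (restrictTo N X) + finrank F (timesTo ((chainForm B ι).orthogonal N) X) =
      X.card * finrank F K := by
  rw [← orthogonal_restrictTo,
    finrank_add_finrank_orthogonal_of_separatingLeft (separatingLeft_chainForm hB _)]
  simp [Module.finrank_pi_fintype]

theorem lagrangian_lam_eq_general [FiniteDimensional F K] {B : BilinForm F K}
    (hB : B.SeparatingLeft) (N : Submodule F (ι → K))
    (hiso : ∀ u ∈ N, ∀ w ∈ N, ∑ x, B (u x) (w x) = 0)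
    (hdim : 2 * finrank F N = Fintype.card ι * finrank F K) (X : Finset ι) :
    finrank F (restrictTo N X) + finrank F (timesTo N X) = X.card * finrank F K := by
  have hN : (chainForm B ι).orthogonal N = N :=
    orthogonal_eq_self_of_le_of_two_mul_finrank_eq (separatingLeft_chainForm hB ι)
      (fun w hw u hu => (chainForm_apply B u w).trans (hiso u hu w hw))
      (by simpa [Module.finrank_pi_fintype] using hdim)
  have hsum := finrank_restrictTo_add_finrank_timesTo_orthogonal hB N X
  rwa [hN] at hsum

end ChainGroup

/-- The form `((a, b), (c, d)) ↦ ad + ε bc` on `F²`, which is `bplus` for `ε = 1` and `bminus` for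
`ε = -1`. -/
def crossForm (ε : F) : BilinForm F (F × F) :=
  (LinearMap.mul F F).compl₁₂ (.fst F F F) (.snd F F F) +
    ε • (LinearMap.mul F F).compl₁₂ (.snd F F F) (.fst F F F)

theorem crossForm_apply (ε : F) (x y : F × F) :
    crossForm ε x y = x.1 * y.2 + ε * (x.2 * y.1) := rfl

theorem separatingLeft_crossForm {ε : F} (hε : ε ≠ 0) : (crossForm ε).SeparatingLeft := by
  intro x hx
  have hfst : x.1 = 0 := by simpa [crossForm_apply] using hx (0, 1)
  have hsnd : x.2 = 0 := by simpa [crossForm_apply, hε] using hx (1, 0)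
  exact Prod.ext hfst hsnd

theorem exists_separatingLeft_bilinForm {β : F × F → F × F → F} (hβ : β = bplus ∨ β = bminus) :
    ∃ B : BilinForm F (F × F), B.SeparatingLeft ∧ ∀ x y, B x y = β x y := by
  rcases hβ with rfl | rfl
  · exact ⟨crossForm 1, separatingLeft_crossForm one_ne_zero, fun x y => by
      simp only [crossForm_apply, bplus, one_mul]⟩
  · exact ⟨crossForm (-1), separatingLeft_crossForm (neg_ne_zero.mpr one_ne_zero), fun x y => by
      simp only [crossForm_apply, bminus, neg_one_mul, sub_eq_add_neg]⟩

/-- For a Lagrangian chain-group `N` on `V` to `K = F²` (a totally isotropic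
subspace of `K^V` of dimension `|V|`), for all `X ⊆ V`,
`dim(N·X) − dim(N×X) = 2(|X| − dim(N×X))`; in particular
`λ_N(X) = |X| − dim(N×X)` is an integer. -/
theorem lagrangian_lam_eq (β : F × F → F × F → F)
    (hβ : β = (bplus : F × F → F × F → F) ∨ β = (bminus : F × F → F × F → F))
    (N : Submodule F (V → F × F))
    (hiso : ∀ u ∈ N, ∀ w ∈ N, ∑ x, β (u x) (w x) = 0)
    (hdim : Module.finrank F N = Fintype.card V) (X : Finset V) :
    (Module.finrank F (restrictTo N X) : ℤ)
        - (Module.finrank F (timesTo N X) : ℤ)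
      = 2 * ((X.card : ℤ) - (Module.finrank F (timesTo N X) : ℤ)) := by
  obtain ⟨B, hB, hBβ⟩ := exists_separatingLeft_bilinForm hβ
  have hsum := lagrangian_lam_eq_general hB N (by simpa only [hBβ] using hiso)
    (by simp [hdim, mul_comm]) X
  simp only [Module.finrank_prod, Module.finrank_self] at hsum
  lia
end

section
/- Let N be a subspace of K^V with K = F², v ∈ V, and let v↑ ∈ K^V be the chain with v↑(v) = (1,0) and v↑(w) = 0 for w ≠ v. Define N∖v = {f restricted to V∖{v} : f ∈ N, ⟨f(v),(1,0)⟩_K = 0}. Then dim(N∖v) = dim N if v↑ ∉ N and v↑ ∈ N^⊥; dim(N∖v) = dim N − 2 if v↑ ∈ N and v↑ ∉ N^⊥; and dim(N∖v) = dim N − 1 otherwise. -/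
variable {F : Type*} [Field F] {V : Type*} [Fintype V] [DecidableEq V]

/-- The constraint `⟨f(v),(1,0)⟩_K = 0` for all `v ∈ X`, used for deletion. -/
def delC (β : (F × F) →ₗ[F] (F × F) →ₗ[F] F) (X : Finset V) :
    Submodule F (V → F × F) :=
  ⨅ v ∈ X, LinearMap.ker ((β.flip (1, 0)).comp (LinearMap.proj v))

/-- The deletion `N∖X` of a chain-group `N`. -/
def deleteCG (β : (F × F) →ₗ[F] (F × F) →ₗ[F] F) (N : Submodule F (V → F × F))
    (X : Finset V) : Submodule F ({x // x ∈ Xᶜ} → F × F) :=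
  (N ⊓ delC β X).map (res F (F × F) Xᶜ)

/-- The chain `v↑`, taking value `(1,0)` at `v` and `0` elsewhere. -/
def vup (v : V) : V → F × F := fun w => if w = v then (1, 0) else 0

/-!
Deleting `v` from `N` takes two steps. Imposing `⟨f(v), (1,0)⟩ = 0` intersects `N` with the kernel
of a linear functional, which lowers the dimension by one exactly when `v↑ ∉ N^⊥`. Forgetting the
coordinate at `v` then kills the constrained chains supported on `{v}`; since the line spanned by
the isotropic vector `(1,0)` is its own orthogonal complement in the plane `K`, these are the
multiples of `v↑` lying in `N`, and the dimension drops by one exactly when `v↑ ∈ N`.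
-/

section LinearAlgebra

variable {F E E' : Type*} [Field F] [AddCommGroup E] [Module F E] [AddCommGroup E'] [Module F E']

theorem finrank_map_add_finrank_inf_ker (M : Submodule F E) [FiniteDimensional F M]
    (g : E →ₗ[F] E') :
    Module.finrank F (M.map g) + Module.finrank F (M ⊓ LinearMap.ker g : Submodule F E) =
      Module.finrank F M := by
  have rank_nullity := (g.domRestrict M).finrank_range_add_finrank_ker
  rwa [LinearMap.range_domRestrict, LinearMap.ker_domRestrict, ← Submodule.finrank_map_subtype_eq,
    Submodule.map_comap_subtype] at rank_nullity

theorem finrank_inf_ker_add_one_of_not_le {M : Submodule F E} [FiniteDimensional F M]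
    {φ : Module.Dual F E} (h : ¬M ≤ LinearMap.ker φ) :
    Module.finrank F (M ⊓ LinearMap.ker φ : Submodule F E) + 1 = Module.finrank F M := by
  have map_eq_top : M.map φ = ⊤ :=
    (eq_bot_or_eq_top (M.map φ)).resolve_left fun hbot => h (LinearMap.le_ker_iff_map.2 hbot)
  rw [← finrank_map_add_finrank_inf_ker M φ, map_eq_top, finrank_top, Module.finrank_self, add_comm]

theorem ker_eq_span_singleton_of_finrank_eq_two (hE : Module.finrank F E = 2)
    {φ : Module.Dual F E} (hφ : φ ≠ 0) {u : E} (hu : u ≠ 0) (hφu : φ u = 0) :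
    LinearMap.ker φ = Submodule.span F {u} := by
  have : FiniteDimensional F E := Module.finite_of_finrank_eq_succ hE
  have finrank_ker := Module.Dual.finrank_ker_add_one_of_ne_zero hφ
  refine (Submodule.eq_of_le_of_finrank_eq
    ((Submodule.span_singleton_le_iff_mem u _).2 hφu) ?_).symm
  rw [finrank_span_singleton hu]
  omega

end LinearAlgebra

theorem vup_eq_single {V : Type*} [DecidableEq V] (v : V) :
    (vup v : V → F × F) = Pi.single v (1, 0) := by
  ext w : 1
  simp only [vup, Pi.single_apply]

theorem vup_ne_zero {V : Type*} [DecidableEq V] (v : V) : (vup v : V → F × F) ≠ 0 := by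
  simp [vup_eq_single]

theorem sum_pairing_vup (β : (F × F) →ₗ[F] (F × F) →ₗ[F] F) (f : V → F × F) (v : V) :
    ∑ x, β (f x) (vup v x) = β (f v) (1, 0) := by
  rw [Fintype.sum_eq_single v fun w hw => by simp [vup, hw]]
  simp [vup]

theorem delC_singleton {V : Type*} (β : (F × F) →ₗ[F] (F × F) →ₗ[F] F) (v : V) :
    delC β {v} = LinearMap.ker ((β.flip (1, 0)).comp (LinearMap.proj v)) := by
  simp only [delC, Finset.mem_singleton, iInf_iInf_eq_left]

theorem le_delC_singleton_iff (β : (F × F) →ₗ[F] (F × F) →ₗ[F] F)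
    (N : Submodule F (V → F × F)) (v : V) :
    N ≤ delC β {v} ↔ ∀ f ∈ N, ∑ x, β (f x) (vup v x) = 0 := by
  simp only [delC_singleton, sum_pairing_vup]
  rfl

theorem ker_res_compl_singleton {R K : Type*} [Semiring R] [AddCommMonoid K] [Module R K] (v : V) :
    LinearMap.ker (res R K ({v} : Finset V)ᶜ) =
      LinearMap.range (LinearMap.single R (fun _ : V => K) v) := by
  ext f
  have mem_ker : f ∈ LinearMap.ker (res R K ({v} : Finset V)ᶜ) ↔ ∀ w ≠ v, f w = 0 := by
    simp [res, funext_iff, LinearMap.funLeft]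
  rw [mem_ker]
  constructor
  · intro hf
    refine ⟨f v, funext fun w => ?_⟩
    by_cases hw : w = v
    · subst hw
      simp
    · simp [hw, hf w hw]
  · rintro ⟨x, rfl⟩ w hw
    simp [hw]

theorem delC_inf_ker_res (β : (F × F) →ₗ[F] (F × F) →ₗ[F] F) (v : V) :
    delC β {v} ⊓ LinearMap.ker (res F (F × F) ({v} : Finset V)ᶜ) =
      (LinearMap.ker (β.flip (1, 0))).map (LinearMap.single F (fun _ : V => F × F) v) := by
  rw [ker_res_compl_singleton, inf_comm, ← Submodule.map_comap_eq, delC_singleton,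
    ← LinearMap.ker_comp, LinearMap.comp_assoc, LinearMap.proj_comp_single_same, LinearMap.comp_id]

theorem delC_inf_ker_res_eq_span_vup {β : (F × F) →ₗ[F] (F × F) →ₗ[F] F}
    (hiso : β (1, 0) (1, 0) = 0) (hne : β.flip (1, 0) ≠ 0) (v : V) :
    delC β {v} ⊓ LinearMap.ker (res F (F × F) ({v} : Finset V)ᶜ) = Submodule.span F {vup v} := by
  have ker_flip : LinearMap.ker (β.flip (1, 0)) = Submodule.span F {(1, 0)} :=
    ker_eq_span_singleton_of_finrank_eq_two (by simp) hne (by simp) hiso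
  rw [delC_inf_ker_res, ker_flip, Submodule.map_span, Set.image_singleton,
    LinearMap.single_apply, vup_eq_single]

theorem finrank_deleteCG_add_finrank_inf_span_vup {β : (F × F) →ₗ[F] (F × F) →ₗ[F] F}
    (hiso : β (1, 0) (1, 0) = 0) (hne : β.flip (1, 0) ≠ 0)
    (N : Submodule F (V → F × F)) (v : V) :
    Module.finrank F (deleteCG β N {v}) +
        Module.finrank F (N ⊓ Submodule.span F {vup v} : Submodule F (V → F × F)) =
      Module.finrank F (N ⊓ delC β {v} : Submodule F (V → F × F)) := by
  rw [← delC_inf_ker_res_eq_span_vup hiso hne, ← inf_assoc, deleteCG,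
    finrank_map_add_finrank_inf_ker]

theorem finrank_deleteCG_add_one_of_vup_mem {β : (F × F) →ₗ[F] (F × F) →ₗ[F] F}
    (hiso : β (1, 0) (1, 0) = 0) (hne : β.flip (1, 0) ≠ 0)
    {N : Submodule F (V → F × F)} {v : V} (hv : vup v ∈ N) :
    Module.finrank F (deleteCG β N {v}) + 1 =
      Module.finrank F (N ⊓ delC β {v} : Submodule F (V → F × F)) := by
  rw [← finrank_deleteCG_add_finrank_inf_span_vup hiso hne,
    inf_eq_right.2 ((Submodule.span_singleton_le_iff_mem _ _).2 hv),
    finrank_span_singleton (vup_ne_zero v)]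

theorem finrank_deleteCG_of_vup_notMem {β : (F × F) →ₗ[F] (F × F) →ₗ[F] F}
    (hiso : β (1, 0) (1, 0) = 0) (hne : β.flip (1, 0) ≠ 0)
    {N : Submodule F (V → F × F)} {v : V} (hv : vup v ∉ N) :
    Module.finrank F (deleteCG β N {v}) =
      Module.finrank F (N ⊓ delC β {v} : Submodule F (V → F × F)) := by
  rw [← finrank_deleteCG_add_finrank_inf_span_vup hiso hne,
    (Submodule.disjoint_span_singleton_of_notMem hv).eq_bot, finrank_bot, add_zero]

theorem finrank_inf_delC_add_one_of_not_le {V : Type*} [Finite V]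
    {β : (F × F) →ₗ[F] (F × F) →ₗ[F] F} {N : Submodule F (V → F × F)} {v : V}
    (h : ¬N ≤ delC β {v}) :
    Module.finrank F (N ⊓ delC β {v} : Submodule F (V → F × F)) + 1 = Module.finrank F N := by
  rw [delC_singleton] at h ⊢
  exact finrank_inf_ker_add_one_of_not_le h

theorem finrank_delete_general (β : (F × F) →ₗ[F] (F × F) →ₗ[F] F)
    (hiso : β (1, 0) (1, 0) = 0) (hne : β.flip (1, 0) ≠ 0)
    (N : Submodule F (V → F × F)) (v : V) :
    (vup v ∉ N ∧ (∀ f ∈ N, ∑ x, β (f x) (vup v x) = 0) →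
      Module.finrank F (deleteCG β N {v}) = Module.finrank F N) ∧
    (vup v ∈ N ∧ ¬(∀ f ∈ N, ∑ x, β (f x) (vup v x) = 0) →
      Module.finrank F (deleteCG β N {v}) + 2 = Module.finrank F N) ∧
    (¬(vup v ∉ N ∧ (∀ f ∈ N, ∑ x, β (f x) (vup v x) = 0)) →
      ¬(vup v ∈ N ∧ ¬(∀ f ∈ N, ∑ x, β (f x) (vup v x) = 0)) →
      Module.finrank F (deleteCG β N {v}) + 1 = Module.finrank F N) := by
  simp only [← le_delC_singleton_iff]
  refine ⟨fun ⟨hv, hN⟩ => ?_, fun ⟨hv, hN⟩ => ?_, fun h_not_first h_not_second => ?_⟩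
  · rw [finrank_deleteCG_of_vup_notMem hiso hne hv, inf_eq_left.2 hN]
  · rw [← finrank_inf_delC_add_one_of_not_le hN, ← finrank_deleteCG_add_one_of_vup_mem hiso hne hv]
  · by_cases hv : vup v ∈ N
    · have hN : N ≤ delC β {v} := by tauto
      rw [finrank_deleteCG_add_one_of_vup_mem hiso hne hv, inf_eq_left.2 hN]
    · have hN : ¬N ≤ delC β {v} := by tauto
      rw [finrank_deleteCG_of_vup_notMem hiso hne hv, finrank_inf_delC_add_one_of_not_le hN]

theorem pairing_one_zero_self_eq_zero {β : (F × F) →ₗ[F] (F × F) →ₗ[F] F}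
    (hβ : β = bplusL F ∨ β = bminusL F) : β (1, 0) (1, 0) = 0 := by
  rcases hβ with rfl | rfl <;> simp [bplusL, bminusL]

theorem pairing_flip_one_zero_ne_zero {β : (F × F) →ₗ[F] (F × F) →ₗ[F] F}
    (hβ : β = bplusL F ∨ β = bminusL F) : β.flip (1, 0) ≠ 0 := by
  intro h
  have pairing_eq_zero : β (0, 1) (1, 0) = 0 := LinearMap.congr_fun h (0, 1)
  rcases hβ with rfl | rfl <;> simp [bplusL, bminusL] at pairing_eq_zero

/-- The dimension of the deletion `N∖v`:  it equals `dim N` if `v↑ ∉ N` and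
`v↑ ∈ N^⊥`; `dim N − 2` if `v↑ ∈ N` and `v↑ ∉ N^⊥`; and `dim N − 1`
otherwise. -/
theorem finrank_delete (β : (F × F) →ₗ[F] (F × F) →ₗ[F] F)
    (hβ : β = bplusL F ∨ β = bminusL F)
    (N : Submodule F (V → F × F)) (v : V) :
    (vup v ∉ N ∧ (∀ f ∈ N, ∑ x, β (f x) (vup v x) = 0) →
      Module.finrank F (deleteCG β N {v}) = Module.finrank F N) ∧
    (vup v ∈ N ∧ ¬(∀ f ∈ N, ∑ x, β (f x) (vup v x) = 0) →
      Module.finrank F (deleteCG β N {v}) + 2 = Module.finrank F N) ∧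
    (¬(vup v ∉ N ∧ (∀ f ∈ N, ∑ x, β (f x) (vup v x) = 0)) →
      ¬(vup v ∈ N ∧ ¬(∀ f ∈ N, ∑ x, β (f x) (vup v x) = 0)) →
      Module.finrank F (deleteCG β N {v}) + 1 = Module.finrank F N) := by
  exact finrank_delete_general β (pairing_one_zero_self_eq_zero hβ)
    (pairing_flip_one_zero_ne_zero hβ) N v
end
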